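/- Let a, b ∈ [0,1], λ₁, λ₂ ≥ 0, ρ₁, ρ₂ ∈ (0,1] with λ₁ < ρ₁, λ₂ < ρ₂, √ρ₁ + √ρ₂ ≥ 1, √ρ₁ + √λ₂ < 1, and √ρ₂ + √λ₁ < 1, and let K = {(q₁,q₂) ∈ [0,1]² : λ₁ < q₁(1−q₂) ≤ ρ₁ and λ₂ < q₂(1−q₁) ≤ ρ₂}. Then the points P₁ = (√ρ₁, 1−√ρ₁) and P₂ = (1−√ρ₂, √ρ₂) both belong to K, and for every (q₁,q₂) ∈ K, S(q₁,q₂) = a·q₁(1−q₂) + b·q₂(1−q₁) ≤ max(S(P₁), S(P₂)) = max(a·ρ₁ + b·(1−√ρ₁)², a·(1−√ρ₂)² + b·ρ₂). -/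

import Mathlib

/-!
Let `x` and `y` be the square roots of the two success rates. By AM-GM, `x + y ≤ 1`, with equality
on the line `q₁ + q₂ = 1`, where `x = q₁` and `y = q₂`. The throughput is `a x² + b y²`, increasing
in both variables, so subject to `x ≤ √ρ₁` and `y ≤ √ρ₂` it is largest on the segment `x + y = 1`.
There it is convex, hence maximal at one of the endpoints `(√ρ₁, 1 - √ρ₁)`, `(1 - √ρ₂, √ρ₂)`.
-/

open Set

theorem add_le_max_of_convexOn_of_monotoneOn {𝕜 β : Type*}
    [Field 𝕜] [LinearOrder 𝕜] [IsStrictOrderedRing 𝕜]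
    [AddCommGroup β] [LinearOrder β] [IsOrderedAddMonoid β] [Module 𝕜 β] [IsStrictOrderedModule 𝕜 β]
    {f g : 𝕜 → β} {c s t x y : 𝕜}
    (hf : ConvexOn 𝕜 univ f) (hg : ConvexOn 𝕜 univ g)
    (hf_mono : MonotoneOn f (Ici 0)) (hg_mono : MonotoneOn g (Ici 0))
    (hx : 0 ≤ x) (hy : 0 ≤ y) (hxs : x ≤ s) (hyt : y ≤ t) (hxy : x + y ≤ c) :
    f x + g y ≤ max (f s + g (c - s)) (f (c - t) + g t) := by
  rcases le_total x (c - t) with hxt | htx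
  · exact le_max_of_le_right <|
      add_le_add (hf_mono hx (hx.trans hxt) hxt) (hg_mono hy (hy.trans hyt) hyt)
  · have hy_le : y ≤ c - x := le_sub_iff_add_le'.2 hxy
    have h_conv : ConvexOn 𝕜 univ fun z ↦ f z + g (c - z) :=
      hf.add (hg.comp_affineMap (AffineEquiv.constVSub 𝕜 c).toAffineMap)
    calc
      f x + g y ≤ f x + g (c - x) := by
        gcongr
        exact hg_mono hy (hy.trans hy_le) hy_le
      _ ≤ max (f s + g (c - s)) (f (c - t) + g (c - (c - t))) := by
        rw [max_comm]
        exact h_conv.le_max_of_mem_Icc (mem_univ _) (mem_univ _) ⟨htx, hxs⟩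
      _ = max (f s + g (c - s)) (f (c - t) + g t) := by rw [sub_sub_cancel]

theorem sqrt_mul_one_sub_add_sqrt_mul_one_sub_le_one {p q : ℝ}
    (hp : p ∈ Icc (0 : ℝ) 1) (hq : q ∈ Icc (0 : ℝ) 1) :
    √(p * (1 - q)) + √(q * (1 - p)) ≤ 1 := by
  have am_gm {u v : ℝ} (hu : 0 ≤ u) (hv : 0 ≤ v) : 2 * √(u * v) ≤ u + v :=
    two_mul_le_add_of_sq_le_mul hu hv (Real.sq_sqrt (mul_nonneg hu hv)).le
  linarith [am_gm hp.1 (sub_nonneg.2 hq.2), am_gm hq.1 (sub_nonneg.2 hp.2)]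

namespace SlottedAloha

/-- The throughput `S(q₁, q₂)` of two users transmitting with probabilities `q.1` and `q.2`, where
`a` and `b` are the probabilities that their channels do not fail. -/
def throughput (a b : ℝ) (q : ℝ × ℝ) : ℝ :=
  a * (q.1 * (1 - q.2)) + b * (q.2 * (1 - q.1))

/-- The secrecy-stability region `K`: the transmission probabilities for which the success rate of
user `i`, disregarding channel failure, exceeds its normalized arrival rate `lᵢ` and is at most
its ratio `rᵢ` of secrecy capacity to channel capacity. -/
def secrecyStabilityRegion (l₁ l₂ r₁ r₂ : ℝ) : Set (ℝ × ℝ) :=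
  {q | q.1 ∈ Icc (0 : ℝ) 1 ∧ q.2 ∈ Icc (0 : ℝ) 1 ∧
    (l₁ < q.1 * (1 - q.2) ∧ q.1 * (1 - q.2) ≤ r₁) ∧
    (l₂ < q.2 * (1 - q.1) ∧ q.2 * (1 - q.1) ≤ r₂)}

variable {a b l₁ l₂ r₁ r₂ x y : ℝ} {q : ℝ × ℝ}

theorem throughput_of_add_eq_one (hxy : x + y = 1) :
    throughput a b (x, y) = a * x ^ 2 + b * y ^ 2 := by
  obtain rfl := eq_sub_of_add_eq' hxy
  simp only [throughput, sub_sub_cancel, sq]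

theorem mem_secrecyStabilityRegion_of_add_eq_one (hxy : x + y = 1)
    (hlx : √l₁ < x) (hxr : x ≤ √r₁) (hly : √l₂ < y) (hyr : y ≤ √r₂) :
    (x, y) ∈ secrecyStabilityRegion l₁ l₂ r₁ r₂ := by
  have hx : 0 < x := (Real.sqrt_nonneg l₁).trans_lt hlx
  have hy : 0 < y := (Real.sqrt_nonneg l₂).trans_lt hly
  have rate_x : x * (1 - y) = x ^ 2 := by rw [← eq_sub_of_add_eq hxy, sq]
  have rate_y : y * (1 - x) = y ^ 2 := by rw [← eq_sub_of_add_eq' hxy, sq]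
  simp only [secrecyStabilityRegion, mem_ofPred_eq, rate_x, rate_y]
  exact ⟨⟨hx.le, by linarith⟩, ⟨hy.le, by linarith⟩,
    ⟨Real.lt_sq_of_sqrt_lt hlx, (Real.le_sqrt' hx).1 hxr⟩,
    ⟨Real.lt_sq_of_sqrt_lt hly, (Real.le_sqrt' hy).1 hyr⟩⟩

theorem throughput_le_max (ha : 0 ≤ a) (hb : 0 ≤ b)
    (hq : q ∈ secrecyStabilityRegion l₁ l₂ r₁ r₂) :
    throughput a b q ≤
      max (throughput a b (√r₁, 1 - √r₁)) (throughput a b (1 - √r₂, √r₂)) := by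
  obtain ⟨hq₁, hq₂, ⟨-, hr₁⟩, -, hr₂⟩ := hq
  have convexOn_mul_sq {k : ℝ} (hk : 0 ≤ k) : ConvexOn ℝ univ fun z ↦ k * z ^ 2 :=
    even_two.convexOn_pow.smul hk
  have monotoneOn_mul_sq {k : ℝ} (hk : 0 ≤ k) : MonotoneOn (fun z ↦ k * z ^ 2) (Ici 0) :=
    fun u (hu : 0 ≤ u) v _ huv ↦ mul_le_mul_of_nonneg_left (pow_le_pow_left₀ hu huv 2) hk
  have rate₁_nonneg : 0 ≤ q.1 * (1 - q.2) := mul_nonneg hq₁.1 (sub_nonneg.2 hq₂.2)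
  have rate₂_nonneg : 0 ≤ q.2 * (1 - q.1) := mul_nonneg hq₂.1 (sub_nonneg.2 hq₁.2)
  rw [throughput_of_add_eq_one (add_sub_cancel _ _), throughput_of_add_eq_one (sub_add_cancel _ _)]
  calc
    throughput a b q = a * √(q.1 * (1 - q.2)) ^ 2 + b * √(q.2 * (1 - q.1)) ^ 2 := by
      rw [Real.sq_sqrt rate₁_nonneg, Real.sq_sqrt rate₂_nonneg, throughput]
    _ ≤ max (a * √r₁ ^ 2 + b * (1 - √r₁) ^ 2) (a * (1 - √r₂) ^ 2 + b * √r₂ ^ 2) :=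
      add_le_max_of_convexOn_of_monotoneOn (convexOn_mul_sq ha) (convexOn_mul_sq hb)
        (monotoneOn_mul_sq ha) (monotoneOn_mul_sq hb) (Real.sqrt_nonneg _) (Real.sqrt_nonneg _)
        (Real.sqrt_le_sqrt hr₁) (Real.sqrt_le_sqrt hr₂)
        (sqrt_mul_one_sub_add_sqrt_mul_one_sub_le_one hq₁ hq₂)

end SlottedAloha

/-- Case (2) of Theorem 2: under the stated conditions, P₁ = (√ρ₁, 1−√ρ₁) and
P₂ = (1−√ρ₂, √ρ₂) lie in the secrecy-stability region K, and the throughput on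
K is bounded by max(S(P₁), S(P₂)) = max(a·ρ₁ + b·(1−√ρ₁)², a·(1−√ρ₂)² + b·ρ₂). -/
theorem stmt_9 (a b l1 l2 r1 r2 : ℝ)
    (ha : a ∈ Set.Icc (0:ℝ) 1) (hb : b ∈ Set.Icc (0:ℝ) 1)
    (h1 : 0 ≤ l1) (h2 : 0 ≤ l2)
    (hr1 : r1 ∈ Set.Ioc (0:ℝ) 1) (hr2 : r2 ∈ Set.Ioc (0:ℝ) 1)
    (hlr1 : l1 < r1) (hlr2 : l2 < r2)
    (hsum : 1 ≤ Real.sqrt r1 + Real.sqrt r2)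
    (hc1 : Real.sqrt r1 + Real.sqrt l2 < 1)
    (hc2 : Real.sqrt r2 + Real.sqrt l1 < 1)
    (K : Set (ℝ × ℝ))
    (hK : K = {p : ℝ × ℝ | p.1 ∈ Set.Icc (0:ℝ) 1 ∧ p.2 ∈ Set.Icc (0:ℝ) 1 ∧
      (l1 < p.1 * (1 - p.2) ∧ p.1 * (1 - p.2) ≤ r1) ∧
      (l2 < p.2 * (1 - p.1) ∧ p.2 * (1 - p.1) ≤ r2)})
    (S : ℝ × ℝ → ℝ)
    (hS : S = fun p => a * (p.1 * (1 - p.2)) + b * (p.2 * (1 - p.1)))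
    (P1 P2 : ℝ × ℝ)
    (hP1 : P1 = (Real.sqrt r1, 1 - Real.sqrt r1))
    (hP2 : P2 = (1 - Real.sqrt r2, Real.sqrt r2)) :
    P1 ∈ K ∧ P2 ∈ K ∧ (∀ p ∈ K, S p ≤ max (S P1) (S P2)) ∧
      max (S P1) (S P2) =
        max (a * r1 + b * (1 - Real.sqrt r1) ^ 2)
            (a * (1 - Real.sqrt r2) ^ 2 + b * r2) := by
  obtain rfl : K = SlottedAloha.secrecyStabilityRegion l1 l2 r1 r2 := hK
  obtain rfl : S = SlottedAloha.throughput a b := hS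
  subst hP1 hP2
  have hl1 : √l1 < √r1 := Real.sqrt_lt_sqrt h1 hlr1
  have hl2 : √l2 < √r2 := Real.sqrt_lt_sqrt h2 hlr2
  refine ⟨?_, ?_, fun p hp ↦ SlottedAloha.throughput_le_max ha.1 hb.1 hp, ?_⟩
  · exact SlottedAloha.mem_secrecyStabilityRegion_of_add_eq_one (add_sub_cancel _ _)
      hl1 le_rfl (lt_sub_iff_add_lt'.2 hc1) (sub_le_iff_le_add'.2 hsum)
  · exact SlottedAloha.mem_secrecyStabilityRegion_of_add_eq_one (sub_add_cancel _ _)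
      (lt_sub_iff_add_lt'.2 hc2) (sub_le_iff_le_add.2 hsum) hl2 le_rfl
  · rw [SlottedAloha.throughput_of_add_eq_one (add_sub_cancel _ _),
      SlottedAloha.throughput_of_add_eq_one (sub_add_cancel _ _),
      Real.sq_sqrt hr1.1.le, Real.sq_sqrt hr2.1.le]
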